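/- arXiv:1808.08431 — 2 statements merged into one kernel-verified Lean document; each statement's English description precedes it below -/
import Mathlib

section
/- Let p(x) = Σ_{j=0}^r b_{α(j)} x^{α(j)} + b_β x^β be a circuit polynomial in n real variables with circuit number Θ_p = Π_{j=0}^r (b_{α(j)}/λ_j)^{λ_j}. If p(x) ≥ 0 for all x ∈ ℝ^n and p is not a sum of monomial squares (i.e. it is not the case that β ∈ (2ℕ)^n and b_β > 0), then |b_β| ≤ Θ_p. -/
/-!
On each open orthant the substitution `x i = ε i * exp (y i)`, with signs `ε i = ±1`, turns `p`
into an exponential sum, with the even monomials positive whatever the signs; since `p` is not a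
sum of monomial squares, the signs can be chosen so that the inner term has coefficient `-|b_β|`.
Uniqueness of the barycentric coordinates makes the outer exponents affinely independent, so there
is an affine function `f` with `b_j * exp (f (α j)) = λ_j` for all `j`. This is the equality case of
the weighted AM-GM inequality: the outer terms add up to `1`, while `exp (f β) = Θ_p⁻¹`. Up to the
positive factor `exp (-f 0)` this is a value of `p`, so `0 ≤ 1 - |b_β| / Θ_p`.
-/

open Finset Real

variable {ι κ : Type*}

section AffineIndependence

variable {k V P : Type*} [Field k] [AddCommGroup V] [Module k V]

theorem exists_linearMap_apply_eq_of_linearIndependent {v : ι → V} (hv : LinearIndependent k v)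
    (t : ι → k) : ∃ f : V →ₗ[k] k, ∀ j, f (v j) = t j := by
  obtain ⟨g, hg⟩ := LinearMap.exists_leftInverse_of_injective _ (LinearMap.ker_eq_bot.mpr hv)
  refine ⟨Finsupp.linearCombination k t ∘ₗ g, fun j ↦ ?_⟩
  have hgv : g (v j) = Finsupp.single j 1 := by
    simpa using LinearMap.congr_fun hg (Finsupp.single j 1)
  simp [hgv]

theorem exists_affineMap_apply_eq_of_affineIndependent [AddTorsor V P] {p : ι → P}
    (hp : AffineIndependent k p) (t : ι → k) : ∃ f : P →ᵃ[k] k, ∀ j, f (p j) = t j := by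
  rcases isEmpty_or_nonempty ι with _ | ⟨⟨j₀⟩⟩
  · exact ⟨AffineMap.const k P 0, isEmptyElim⟩
  obtain ⟨g, hg⟩ := exists_linearMap_apply_eq_of_linearIndependent
    ((affineIndependent_iff_linearIndependent_vsub k p j₀).mp hp) fun j ↦ t j - t j₀
  refine ⟨g.toAffineMap.comp (AffineEquiv.vaddConst k (p j₀)).symm.toAffineMap
    + AffineMap.const k P (t j₀), fun j ↦ ?_⟩
  rcases eq_or_ne j j₀ with rfl | hj
  · simp
  · simp [hg ⟨j, hj⟩]

variable [LinearOrder k] [IsStrictOrderedRing k]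

theorem exists_pos_forall_pos_add_mul [Finite ι] {w : ι → k} (hw : ∀ j, 0 < w j) (v : ι → k) :
    ∃ δ > 0, ∀ j, 0 < w j + δ * v j := by
  have hlarge : ∀ᶠ M in Filter.atTop, ∀ j, -v j / w j < M :=
    Filter.eventually_all.mpr fun j ↦ Filter.eventually_gt_atTop _
  obtain ⟨M, hM, hM₀⟩ := (hlarge.and (Filter.eventually_gt_atTop 0)).exists
  refine ⟨M⁻¹, inv_pos.mpr hM₀, fun j ↦ ?_⟩
  have hpos : 0 < M * w j + v j := by linarith [(div_lt_iff₀ (hw j)).mp (hM j)]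
  calc 0 < M⁻¹ * (M * w j + v j) := by positivity
    _ = w j + M⁻¹ * v j := by field_simp

-- An affine dependence could be added, suitably scaled, to `w` without losing positivity.
theorem affineIndependent_of_unique_pos_weights [Fintype ι] {p : ι → V} {w : ι → k}
    (hw : ∀ j, 0 < w j)
    (huniq : ∀ w' : ι → k, (∀ j, 0 < w' j) → ∑ j, w' j = ∑ j, w j →
      ∑ j, w' j • p j = ∑ j, w j • p j → w' = w) :
    AffineIndependent k p := by
  rw [affineIndependent_iff_of_fintype]
  intro v hv hvp j
  rw [univ.weightedVSub_eq_linear_combination hv] at hvp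
  obtain ⟨δ, hδ, hpos⟩ := exists_pos_forall_pos_add_mul hw v
  have hperturb := huniq (fun j ↦ w j + δ * v j) hpos
    (by simp [sum_add_distrib, ← mul_sum, hv])
    (by simp [add_smul, mul_smul, sum_add_distrib, ← smul_sum, hvp])
  simpa [hδ.ne'] using congrFun hperturb j

end AffineIndependence

section CircuitNumber

variable [Fintype ι] {b lam : ι → ℝ}

/-- The circuit number `Θ = ∏ j, (b j / λ j) ^ λ j` of a circuit polynomial with outer coefficients
`b` whose inner exponent has barycentric coordinates `lam` with respect to the outer exponents. -/
noncomputable def circuitNumber (b lam : ι → ℝ) : ℝ := ∏ j, (b j / lam j) ^ lam j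

theorem circuitNumber_pos (hb : ∀ j, 0 < b j) (hlam : ∀ j, 0 < lam j) :
    0 < circuitNumber b lam :=
  prod_pos fun j _ ↦ rpow_pos_of_pos (div_pos (hb j) (hlam j)) _

theorem exp_sum_mul_log_div_eq_inv_circuitNumber (hb : ∀ j, 0 < b j) (hlam : ∀ j, 0 < lam j) :
    exp (∑ j, lam j * log (lam j / b j)) = (circuitNumber b lam)⁻¹ := by
  rw [circuitNumber, exp_sum, ← prod_inv_distrib]
  refine prod_congr rfl fun j _ ↦ ?_
  have hpos := div_pos (hlam j) (hb j)
  rw [← inv_rpow (inv_div (lam j) (b j) ▸ inv_nonneg.mpr hpos.le), inv_div,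
    rpow_def_of_pos hpos, mul_comm]

variable {V : Type*} [AddCommGroup V] [Module ℝ V]

theorem neg_le_circuitNumber_of_exp_sum_nonneg {α : ι → V} {c : ℝ} (hα : AffineIndependent ℝ α)
    (hb : ∀ j, 0 < b j) (hlam : ∀ j, 0 < lam j) (hlamsum : ∑ j, lam j = 1)
    (hnonneg : ∀ g : V →ₗ[ℝ] ℝ,
      0 ≤ ∑ j, b j * exp (g (α j)) + c * exp (g (∑ j, lam j • α j))) :
    -c ≤ circuitNumber b lam := by
  obtain ⟨f, hf⟩ := exists_affineMap_apply_eq_of_affineIndependent hα fun j ↦ log (lam j / b j)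
  have houter (j : ι) : b j * exp (f (α j)) = lam j := by
    rw [hf, exp_log (div_pos (hlam j) (hb j)), mul_div_cancel₀ _ (hb j).ne']
  have hinner : exp (f (∑ j, lam j • α j)) = (circuitNumber b lam)⁻¹ := by
    rw [← exp_sum_mul_log_div_eq_inv_circuitNumber hb hlam,
      ← univ.affineCombination_eq_linear_combination α lam hlamsum,
      univ.map_affineCombination α lam hlamsum,
      univ.affineCombination_eq_linear_combination _ lam hlamsum]
    simp [hf]
  have hlinear (v : V) : exp (f.linear v) = exp (-f 0) * exp (f v) := by
    rw [← exp_add, congrFun f.decomp v, Pi.add_apply, neg_add_cancel_comm_assoc]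
  have hvalue : 0 ≤ exp (-f 0) * (1 + c * (circuitNumber b lam)⁻¹) := by
    calc 0 ≤ ∑ j, b j * exp (f.linear (α j)) + c * exp (f.linear (∑ j, lam j • α j)) :=
          hnonneg f.linear
      _ = exp (-f 0) * (∑ j, b j * exp (f (α j)) + c * exp (f (∑ j, lam j • α j))) := by
          simp only [hlinear, mul_add, mul_sum, mul_left_comm]
      _ = exp (-f 0) * (1 + c * (circuitNumber b lam)⁻¹) := by
          simp only [houter, hinner, hlamsum]
  have hΘ := circuitNumber_pos hb hlam
  have hratio : -c / circuitNumber b lam ≤ 1 := by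
    rw [neg_div, div_eq_mul_inv]
    linarith [nonneg_of_mul_nonneg_right hvalue (exp_pos _)]
  exact (div_le_one hΘ).mp hratio

end CircuitNumber

section Orthants

variable {k : Type*} [Field k] [Fintype κ]

theorem exists_signs_mul_prod_zpow_eq_neg_abs [LinearOrder k] [IsStrictOrderedRing k]
    {γ : κ → ℤ} {c : k} (h : ¬((∀ i, Even (γ i)) ∧ 0 < c)) :
    ∃ ε : κ → k, (∀ i, ε i = 1 ∨ ε i = -1) ∧ c * ∏ i, ε i ^ γ i = -|c| := by
  classical
  rcases le_or_gt c 0 with hc | hc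
  · exact ⟨1, by simp, by simp [abs_of_nonpos hc]⟩
  obtain ⟨i₀, hi₀⟩ : ∃ i, ¬Even (γ i) := by
    by_contra! heven
    exact h ⟨heven, hc⟩
  refine ⟨Pi.mulSingle i₀ (-1), fun i ↦ ?_, ?_⟩
  · rcases eq_or_ne i i₀ with rfl | hi
    · simp
    · simp [hi]
  · rw [prod_eq_single i₀ (fun i _ hi ↦ by simp [hi]) (by simp), Pi.mulSingle_eq_same,
      (Int.not_even_iff_odd.mp hi₀).neg_one_zpow, mul_neg_one, abs_of_pos hc]

theorem prod_zpow_eq_one_of_even {ε : κ → k} (hε : ∀ i, ε i = 1 ∨ ε i = -1) {γ : κ → ℤ}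
    (hγ : ∀ i, Even (γ i)) : ∏ i, ε i ^ γ i = 1 :=
  prod_eq_one fun i _ ↦ by rcases hε i with h | h <;> simp [h, (hγ i).neg_one_zpow]

theorem prod_mul_exp_zpow [DecidableEq κ] (ε : κ → ℝ) (g : (κ → ℝ) →ₗ[ℝ] ℝ) (γ : κ → ℤ) :
    ∏ i, (ε i * exp (g (Pi.single i 1))) ^ γ i = (∏ i, ε i ^ γ i) * exp (g fun i ↦ γ i) := by
  have hsum : g (fun i ↦ γ i) = ∑ i, g (Pi.single i 1) * γ i := by
    rw [pi_eq_sum_univ' fun i ↦ (γ i : ℝ)]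
    simp only [map_sum, map_smul, smul_eq_mul, mul_comm]
  simp only [hsum, mul_zpow, prod_mul_distrib, exp_sum, exp_mul, rpow_intCast]

end Orthants

theorem abs_le_circuit_number_of_circuit_polynomial_nonneg_general [Fintype ι] [Fintype κ]
    {α : ι → κ → ℤ} {β : κ → ℤ} {b : ι → ℝ} {c : ℝ} {lam : ι → ℝ}
    (hb : ∀ j, 0 < b j) (heven : ∀ j i, Even (α j i))
    (hlam : ∀ j, 0 < lam j) (hlamsum : ∑ j, lam j = 1)
    (hbar : ∀ i, (β i : ℝ) = ∑ j, lam j * (α j i : ℝ))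
    (huniq : ∀ mu : ι → ℝ, (∀ j, 0 < mu j) → ∑ j, mu j = 1 →
      (∀ i, (β i : ℝ) = ∑ j, mu j * (α j i : ℝ)) → mu = lam)
    (hnonneg : ∀ x : κ → ℝ, (∀ i, x i ≠ 0) →
      0 ≤ (∑ j, b j * ∏ i, x i ^ α j i) + c * ∏ i, x i ^ β i)
    (hnotsq : ¬((∀ i, Even (β i)) ∧ 0 < c)) :
    |c| ≤ circuitNumber b lam := by
  classical
  have hβ : ∑ j, lam j • (fun i ↦ (α j i : ℝ)) = fun i ↦ (β i : ℝ) := by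
    ext i
    simp [hbar]
  have hα : AffineIndependent ℝ fun j i ↦ (α j i : ℝ) :=
    affineIndependent_of_unique_pos_weights hlam fun mu hmu hmusum hmubar ↦
      huniq mu hmu (hmusum.trans hlamsum) fun i ↦ by
        simpa using (congrFun (hmubar.trans hβ) i).symm
  obtain ⟨ε, hε, hεc⟩ := exists_signs_mul_prod_zpow_eq_neg_abs hnotsq
  have hε₀ (i : κ) : ε i ≠ 0 := by rcases hε i with h | h <;> simp [h]
  rw [← neg_neg |c|]
  refine neg_le_circuitNumber_of_exp_sum_nonneg hα hb hlam hlamsum fun g ↦ ?_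
  have hvalue := hnonneg (fun i ↦ ε i * exp (g (Pi.single i 1)))
    fun i ↦ mul_ne_zero (hε₀ i) (exp_ne_zero _)
  simpa only [prod_mul_exp_zpow, prod_zpow_eq_one_of_even hε (heven _), one_mul, ← mul_assoc,
    hεc, hβ] using hvalue

/-- If a circuit polynomial
`p(x) = Σ_{j=0}^r b_{α(j)} x^{α(j)} + b_β x^β` is nonnegative on `ℝ^n` and is
not a sum of monomial squares (i.e. it is not the case that `β ∈ (2ℕ)^n` and
`b_β > 0`), then `|b_β| ≤ Θ_p`, where `Θ_p = Π_j (b_{α(j)}/λ_j)^{λ_j}` is the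
circuit number. -/
theorem abs_le_circuit_number_of_circuit_polynomial_nonneg
    (n r : ℕ) (hr : r ≤ n)
    (α : Fin (r + 1) → Fin n → ℕ) (β : Fin n → ℕ)
    (b : Fin (r + 1) → ℝ) (c : ℝ) (lam : Fin (r + 1) → ℝ)
    (hb : ∀ j, 0 < b j)
    (heven : ∀ j i, Even (α j i))
    (hlam : ∀ j, 0 < lam j)
    (hlamsum : ∑ j, lam j = 1)
    (hbar : ∀ i, (β i : ℝ) = ∑ j, lam j * (α j i : ℝ))
    (huniq : ∀ mu : Fin (r + 1) → ℝ, (∀ j, 0 < mu j) → ∑ j, mu j = 1 →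
        (∀ i, (β i : ℝ) = ∑ j, mu j * (α j i : ℝ)) → mu = lam)
    (hnonneg : ∀ x : Fin n → ℝ,
      0 ≤ (∑ j, b j * ∏ i, x i ^ α j i) + c * ∏ i, x i ^ β i)
    (hnotsq : ¬ ((∀ i, Even (β i)) ∧ 0 < c)) :
    |c| ≤ ∏ j, (b j / lam j) ^ lam j := by
  exact abs_le_circuit_number_of_circuit_polynomial_nonneg_general hb
    (α := fun j i ↦ α j i) (β := fun i ↦ β i) (by exact_mod_cast heven) hlam hlamsum
    (by simpa using hbar) (by simpa using huniq) (fun x _ ↦ by simpa using hnonneg x)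
    (by simpa using hnotsq)
end

section
/- Let p(x) = Σ_{i=0}^{h−1} b_i x^{α(i)} + Σ_{j=0}^{t−h−1} b_{h+j} x^{β(j)} be a polynomial in n real variables where α(0) = 0, each α(i) ∈ (2ℕ)^n, b_i > 0 for 0 ≤ i ≤ h−1, and for each j there are λ_{i,j} > 0 with Σ_{i=0}^{h−1} λ_{i,j} = 1 and β(j) = Σ_{i=0}^{h−1} λ_{i,j} α(i). Suppose X = (X_{i,j}) with X_{i,j} > 0 satisfies Σ_{j=0}^{t−h−1} X_{i,j} ≤ b_i for all 1 ≤ i ≤ h−1 and Π_{i=0}^{h−1} (X_{i,j}/λ_{i,j})^{λ_{i,j}} ≥ |b_{h+j}| for all 0 ≤ j ≤ t−h−1. Then with γ = Σ_{j=0}^{t−h−1} X_{0,j} − b_0, the polynomial p + γ is a sum of nonnegative circuit polynomials (plus monomial squares); in particular p(x) ≥ b_0 − Σ_{j=0}^{t−h−1} X_{0,j} for all x ∈ ℝ^n. -/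
/-!
Since `α(0) = 0`, adding `γ` replaces `b₀` by `∑ⱼ X₀ⱼ`. Then every coefficient satisfies
`∑ⱼ Xᵢⱼ ≤ bᵢ`, so up to monomial squares `p + γ` is the sum over `j` of
`∑ᵢ Xᵢⱼ x^α(i) + cⱼ x^β(j)`, and each of these is nonnegative by the weighted AM-GM inequality.

These summands need not be circuit polynomials, as the `α(i)` may be affinely dependent. Fix the
quotients `yᵢ = Xᵢⱼ / λᵢⱼ` and call weights `w` good if `∑ᵢ wᵢ yᵢ x^α(i) + c x^β` is SONC whenever
`|c| ≤ ∏ᵢ yᵢ ^ wᵢ`. The good weights form a convex set, because `w ↦ ∏ᵢ yᵢ ^ wᵢ` is convex, so that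
`c` can be distributed over the two ends of a segment. Weights of `β` with affinely independent
support are good, as they give honest circuit polynomials, and all weights of `β` are convex
combinations of these.
-/

open MvPolynomial

/-- `p` is a circuit polynomial in `n` variables. -/
def IsCircuitPoly {n : ℕ} (p : MvPolynomial (Fin n) ℝ) : Prop :=
  ∃ r : ℕ, r ≤ n ∧
    ∃ (α : Fin (r + 1) → (Fin n →₀ ℕ)) (β : Fin n →₀ ℕ)
      (b : Fin (r + 1) → ℝ) (c : ℝ) (lam : Fin (r + 1) → ℝ),
      (∀ j, 0 < b j) ∧ (∀ j i, Even (α j i)) ∧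
      (∀ j, 0 < lam j) ∧ (∑ j, lam j = 1) ∧
      (∀ i, (β i : ℝ) = ∑ j, lam j * (α j i : ℝ)) ∧
      (∀ mu : Fin (r + 1) → ℝ, (∀ j, 0 < mu j) → ∑ j, mu j = 1 →
        (∀ i, (β i : ℝ) = ∑ j, mu j * (α j i : ℝ)) → mu = lam) ∧
      p = (∑ j, monomial (α j) (b j)) + monomial β c

/-- `p` is a single monomial square `c·x^α` with `c > 0` and `α ∈ (2ℕ)^n`. -/
def IsMonomialSquare {n : ℕ} (p : MvPolynomial (Fin n) ℝ) : Prop :=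
  ∃ (α : Fin n →₀ ℕ) (c : ℝ), 0 < c ∧ (∀ i, Even (α i)) ∧ p = monomial α c

section BasicWeights

variable {𝕜 ι E : Type*} [Fintype ι] [AddCommGroup E]

lemma exists_affine_relation_of_not_affineIndependent [Ring 𝕜] [Module 𝕜 E] {z : ι → E} {s : Set ι}
    (hz : ¬ AffineIndependent 𝕜 fun i : s => z i) :
    ∃ v : ι → 𝕜, v ≠ 0 ∧ Function.support v ⊆ s ∧ ∑ i, v i = 0 ∧ ∑ i, v i • z i = 0 := by
  classical
  simp only [affineIndependent_iff_of_fintype, not_forall] at hz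
  obtain ⟨g, hsum, hrel, i, hgi⟩ := hz
  rw [Finset.univ.weightedVSub_eq_linear_combination hsum] at hrel
  let v : ι → 𝕜 := Function.extend Subtype.val g 0
  have hv (j : s) : v j = g j := Subtype.val_injective.extend_apply _ _ j
  have hv₀ (j : ι) (hj : j ∉ Set.range (Subtype.val : s → ι)) : v j = 0 :=
    Function.extend_apply' _ _ _ hj
  refine ⟨v, fun h => hgi (by simp [← hv, h]), fun j hj => ?_, ?_, ?_⟩
  · by_contra hjs
    exact hj (hv₀ j (by simpa using hjs))
  · rw [← hsum]
    exact (Fintype.sum_of_injective _ Subtype.val_injective g v hv₀ fun j => (hv j).symm).symm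
  · rw [← hrel]
    exact (Fintype.sum_of_injective _ Subtype.val_injective (fun j => g j • z j)
      (fun j => v j • z j) (fun j hj => by simp [hv₀ j hj]) fun j => by simp [hv]).symm

variable [Field 𝕜] [LinearOrder 𝕜] [Module 𝕜 E]

variable (𝕜) in
/-- The convex weights that represent `x` as a combination of the points `z i` and charge only an
affinely independent subfamily of them: the basic feasible solutions of the system
`∑ i, w i • z i = x`, `∑ i, w i = 1`, `0 ≤ w`. -/
def basicWeights (z : ι → E) (x : E) : Set (ι → 𝕜) :=
  {w ∈ stdSimplex 𝕜 ι | ∑ i, w i • z i = x ∧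
    AffineIndependent 𝕜 fun i : Function.support w => z i}

variable [IsStrictOrderedRing 𝕜]

lemma exists_pos_add_smul_mem_stdSimplex {w v : ι → 𝕜} (hw : w ∈ stdSimplex 𝕜 ι) (hv : v ≠ 0)
    (hvw : Function.support v ⊆ Function.support w) (hsum : ∑ i, v i = 0) :
    ∃ s : 𝕜, 0 < s ∧ w + s • v ∈ stdSimplex 𝕜 ι ∧
      Function.support (w + s • v) ⊂ Function.support w := by
  classical
  obtain ⟨i₀, -, hi₀⟩ : ∃ i ∈ Finset.univ, 0 < (-v) i :=
    Finset.exists_pos_of_sum_zero_of_exists_nonzero _ (by simp [hsum])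
      (by simpa [Function.ne_iff] using hv)
  obtain ⟨m, hm, hmin⟩ := Finset.exists_min_image {i | v i < 0} (fun i => w i / -v i)
    ⟨i₀, by simpa using hi₀⟩
  simp only [Finset.mem_filter, Finset.mem_univ, true_and] at hm hmin
  -- `m` is the first coordinate to vanish when moving from `w` in direction `v`.
  have hwm : 0 < w m := (hw.1 m).lt_of_ne' (hvw hm.ne)
  have hs : 0 < w m / -v m := div_pos hwm (neg_pos.2 hm)
  refine ⟨w m / -v m, hs, ⟨fun i => ?_, ?_⟩, ?_⟩
  · rcases lt_or_ge (v i) 0 with hi | hi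
    · have := (le_div_iff₀ (neg_pos.2 hi)).1 (hmin i hi)
      simp only [Pi.add_apply, Pi.smul_apply, smul_eq_mul]
      linarith
    · exact add_nonneg (hw.1 i) (mul_nonneg hs.le hi)
  · simp [Finset.sum_add_distrib, ← Finset.mul_sum, hsum, hw.2]
  · refine Set.ssubset_iff_exists.2 ⟨fun i hi hwi => hi ?_, m, hwm.ne', ?_⟩
    · have hvi : v i = 0 := by_contra fun h => hvw h hwi
      simp [hwi, hvi]
    · have := hm.ne
      simp only [Function.mem_support, Pi.add_apply, Pi.smul_apply, smul_eq_mul, not_not]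
      field_simp
      ring

theorem mem_convexHull_basicWeights (z : ι → E) {w : ι → 𝕜} (hw : w ∈ stdSimplex 𝕜 ι) :
    w ∈ convexHull 𝕜 (basicWeights 𝕜 z (∑ i, w i • z i)) := by
  induction hcard : (Function.support w).ncard using Nat.strong_induction_on generalizing w with
  | _ N ih =>
    by_cases hz : AffineIndependent 𝕜 fun i : Function.support w => z i
    · exact subset_convexHull 𝕜 _ ⟨hw, rfl, hz⟩
    obtain ⟨v, hv, hvw, hsum, hrel⟩ := exists_affine_relation_of_not_affineIndependent hz
    have move {u : ι → 𝕜} {s : 𝕜} (hu : ∑ i, u i • z i = 0)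
        (hmem : w + s • u ∈ stdSimplex 𝕜 ι)
        (hlt : Function.support (w + s • u) ⊂ Function.support w) :
        w + s • u ∈ convexHull 𝕜 (basicWeights 𝕜 z (∑ i, w i • z i)) := by
      have hrep : ∑ i, (w + s • u) i • z i = ∑ i, w i • z i := by
        simp [add_smul, Finset.sum_add_distrib, mul_smul, ← Finset.smul_sum, hu]
      exact hrep ▸ ih _ (hcard ▸ Set.ncard_lt_ncard hlt) hmem rfl
    obtain ⟨s, hs, hs_mem, hs_lt⟩ := exists_pos_add_smul_mem_stdSimplex hw hv hvw hsum
    obtain ⟨t, ht, ht_mem, ht_lt⟩ := exists_pos_add_smul_mem_stdSimplex hw (neg_ne_zero.2 hv)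
      (by simpa using hvw) (by simp [hsum])
    convert convex_convexHull 𝕜 _ (move hrel hs_mem hs_lt) (move (by simp [hrel]) ht_mem ht_lt)
      (a := t / (s + t)) (b := s / (s + t)) (by positivity) (by positivity)
      (by field_simp; ring) using 1
    ext i
    simp only [Pi.add_apply, Pi.smul_apply, Pi.neg_apply, smul_eq_mul]
    field_simp
    ring

end BasicWeights

section ArithGeomMean

variable {ι σ : Type*} [Fintype ι] {α : ι → σ →₀ ℕ} {β : σ →₀ ℕ} {w : ι → ℝ}

lemma prod_pow_eq_prod_prod_pow_rpow [Fintype σ] (hw : ∀ i, 0 ≤ w i)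
    (hβ : ∀ k, (β k : ℝ) = ∑ i, w i * (α i k : ℝ)) {t : σ → ℝ} (ht : ∀ k, 0 ≤ t k) :
    ∏ k, t k ^ β k = ∏ i, (∏ k, t k ^ α i k) ^ w i :=
  calc
    ∏ k, t k ^ β k = ∏ k, ∏ i, (t k ^ α i k) ^ w i := by
      refine Finset.prod_congr rfl fun k _ => ?_
      rw [← Real.rpow_natCast, hβ k, Real.rpow_sum_of_nonneg (ht k)
        fun i _ => mul_nonneg (hw i) (Nat.cast_nonneg _)]
      refine Finset.prod_congr rfl fun i _ => ?_
      rw [mul_comm, Real.rpow_mul (ht k), Real.rpow_natCast]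
    _ = ∏ i, ∏ k, (t k ^ α i k) ^ w i := Finset.prod_comm
    _ = ∏ i, (∏ k, t k ^ α i k) ^ w i :=
      Finset.prod_congr rfl fun i _ => Real.finsetProd_rpow _ _ (fun k _ => pow_nonneg (ht k) _) _

lemma eval_monomial_eq_mul_prod [Fintype σ] {R : Type*} [CommSemiring R] (γ : σ →₀ ℕ) (a : R)
    (x : σ → R) :
    eval x (monomial γ a) = a * ∏ k, x k ^ γ k := by
  rw [eval_monomial, Finsupp.prod_fintype _ _ fun _ => pow_zero _]

theorem eval_sum_monomial_add_monomial_nonneg [Finite σ] (hα : ∀ i k, Even (α i k))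
    (hw : w ∈ stdSimplex ℝ ι) (hβ : ∀ k, (β k : ℝ) = ∑ i, w i * (α i k : ℝ)) {y : ι → ℝ}
    (hy : ∀ i, 0 ≤ y i) {c : ℝ} (hc : |c| ≤ ∏ i, y i ^ w i) (x : σ → ℝ) :
    0 ≤ eval x (∑ i, monomial (α i) (w i * y i) + monomial β c) := by
  have := Fintype.ofFinite σ
  let t (i : ι) : ℝ := ∏ k, |x k| ^ α i k
  have ht (i : ι) : 0 ≤ t i := by positivity
  have hxt (i : ι) : ∏ k, x k ^ α i k = t i :=
    Finset.prod_congr rfl fun k _ => ((hα i k).pow_abs _).symm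
  have hterm : |c * ∏ k, x k ^ β k| ≤ ∑ i, w i * (y i * t i) :=
    calc
      |c * ∏ k, x k ^ β k| = |c| * ∏ i, t i ^ w i := by
        rw [abs_mul, Finset.abs_prod,
          ← prod_pow_eq_prod_prod_pow_rpow hw.1 hβ fun k => abs_nonneg (x k)]
        simp only [abs_pow]
      _ ≤ (∏ i, y i ^ w i) * ∏ i, t i ^ w i := by gcongr
      _ = ∏ i, (y i * t i) ^ w i := by
        simp only [← Finset.prod_mul_distrib, Real.mul_rpow (hy _) (ht _)]
      _ ≤ ∑ i, w i * (y i * t i) :=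
        Real.geom_mean_le_arith_mean_weighted _ _ _ (fun i _ => hw.1 i) hw.2
          fun i _ => mul_nonneg (hy i) (ht i)
  simp only [map_add, map_sum, eval_monomial_eq_mul_prod, hxt, mul_assoc]
  linarith [neg_abs_le (c * ∏ k, x k ^ β k)]

lemma prod_rpow_add_smul_le {y u v : ι → ℝ} (hy : ∀ i, 0 ≤ y i) (hu : ∀ i, 0 ≤ u i)
    (hv : ∀ i, 0 ≤ v i) {θ τ : ℝ} (hθ : 0 ≤ θ) (hτ : 0 ≤ τ) (hθτ : θ + τ = 1) :
    ∏ i, y i ^ (θ • u + τ • v) i ≤ θ * ∏ i, y i ^ u i + τ * ∏ i, y i ^ v i := by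
  have hpow (w : ι → ℝ) (i : ι) : 0 ≤ y i ^ w i := Real.rpow_nonneg (hy i) _
  calc
    ∏ i, y i ^ (θ • u + τ • v) i = ∏ i, (y i ^ u i) ^ θ * (y i ^ v i) ^ τ := by
      refine Finset.prod_congr rfl fun i _ => ?_
      rw [← Real.rpow_mul (hy i), ← Real.rpow_mul (hy i), ← Real.rpow_add_of_nonneg (hy i)
        (mul_nonneg (hu i) hθ) (mul_nonneg (hv i) hτ)]
      simp [mul_comm]
    _ = (∏ i, y i ^ u i) ^ θ * (∏ i, y i ^ v i) ^ τ := by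
      rw [Finset.prod_mul_distrib, Real.finsetProd_rpow _ _ fun i _ => hpow u i,
        Real.finsetProd_rpow _ _ fun i _ => hpow v i]
    _ ≤ θ * ∏ i, y i ^ u i + τ * ∏ i, y i ^ v i :=
      Real.geom_mean_le_arith_mean2_weighted hθ hτ (Finset.prod_nonneg fun i _ => hpow u i)
        (Finset.prod_nonneg fun i _ => hpow v i) hθτ

lemma exists_abs_le_eq_mul_add_mul {𝕜 : Type*} [Field 𝕜] [LinearOrder 𝕜]
    [IsStrictOrderedRing 𝕜] {θ τ A B c : 𝕜} (hθ : 0 ≤ θ) (hτ : 0 ≤ τ) (hA : 0 ≤ A) (hB : 0 ≤ B)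
    (hc : |c| ≤ θ * A + τ * B) :
    ∃ a b : 𝕜, |a| ≤ A ∧ |b| ≤ B ∧ c = θ * a + τ * b := by
  have hD : 0 ≤ θ * A + τ * B := by positivity
  have hu : |c / (θ * A + τ * B)| ≤ 1 := by
    rw [abs_div, abs_of_nonneg hD]
    exact div_le_one_of_le₀ hc hD
  refine ⟨c / (θ * A + τ * B) * A, c / (θ * A + τ * B) * B, ?_, ?_, ?_⟩
  · rw [abs_mul, abs_of_nonneg hA]
    exact mul_le_of_le_one_left hA hu
  · rw [abs_mul, abs_of_nonneg hB]
    exact mul_le_of_le_one_left hB hu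
  · have hcD : c / (θ * A + τ * B) * (θ * A + τ * B) = c :=
      div_mul_cancel_of_imp fun h => abs_nonpos_iff.1 (hc.trans h.le)
    linear_combination -hcD

end ArithGeomMean

section SoncCone

variable {n : ℕ}

/-- The polynomials allowed as summands in a SONC decomposition. -/
def IsSoncSummand (q : MvPolynomial (Fin n) ℝ) : Prop :=
  (IsCircuitPoly q ∧ ∀ x : Fin n → ℝ, 0 ≤ eval x q) ∨ IsMonomialSquare q

/-- The cone of sums of nonnegative circuit polynomials and monomial squares. It is encoded as an
additive submonoid; stability under nonnegative scalars is `smul_mem_soncCone`. -/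
noncomputable def soncCone (n : ℕ) : AddSubmonoid (MvPolynomial (Fin n) ℝ) :=
  AddSubmonoid.closure {q | IsSoncSummand q}

lemma exists_fin_sum_of_mem_soncCone {p : MvPolynomial (Fin n) ℝ} (hp : p ∈ soncCone n) :
    ∃ (N : ℕ) (q : Fin N → MvPolynomial (Fin n) ℝ), (∀ m, IsSoncSummand (q m)) ∧
      p = ∑ m, q m := by
  obtain ⟨l, hl, rfl⟩ := AddSubmonoid.exists_list_of_mem_closure hp
  exact ⟨l.length, l.get, fun m => hl _ (l.get_mem m), by simp [Fin.sum_univ_getElem]⟩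

lemma monomial_mem_soncCone {γ : Fin n →₀ ℕ} (hγ : ∀ k, Even (γ k)) {a : ℝ} (ha : 0 ≤ a) :
    monomial γ a ∈ soncCone n := by
  rcases ha.eq_or_lt with rfl | ha
  · simp
  · exact AddSubmonoid.subset_closure (Or.inr ⟨γ, a, ha, hγ, rfl⟩)

lemma IsSoncSummand.smul {q : MvPolynomial (Fin n) ℝ} (hq : IsSoncSummand q) {θ : ℝ}
    (hθ : 0 < θ) : IsSoncSummand (θ • q) := by
  rcases hq with ⟨⟨r, hr, α, β, b, c, lam, hb, hα, hlam, hsum, hβ, hunique, rfl⟩, hnonneg⟩ |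
    ⟨γ, a, ha, hγ, rfl⟩
  · refine Or.inl ⟨⟨r, hr, α, β, θ • b, θ • c, lam, fun j => mul_pos hθ (hb j), hα, hlam, hsum,
      hβ, hunique, ?_⟩, fun x => ?_⟩
    · simp [Finset.smul_sum, smul_monomial]
    · rw [smul_eval]
      exact mul_nonneg hθ.le (hnonneg x)
  · exact Or.inr ⟨γ, θ • a, mul_pos hθ ha, hγ, smul_monomial θ⟩

lemma smul_mem_soncCone {p : MvPolynomial (Fin n) ℝ} (hp : p ∈ soncCone n) {θ : ℝ}
    (hθ : 0 ≤ θ) : θ • p ∈ soncCone n := by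
  rcases hθ.eq_or_lt with rfl | hθ
  · simp
  induction hp using AddSubmonoid.closure_induction with
  | mem q hq => exact AddSubmonoid.subset_closure (hq.smul hθ)
  | zero => simp
  | add p q _ _ hp hq => exact smul_add θ p q ▸ add_mem hp hq

lemma eval_nonneg_of_mem_soncCone {p : MvPolynomial (Fin n) ℝ} (hp : p ∈ soncCone n)
    (x : Fin n → ℝ) : 0 ≤ eval x p := by
  induction hp using AddSubmonoid.closure_induction with
  | mem q hq =>
    rcases hq with ⟨_, hq⟩ | ⟨γ, a, ha, hγ, rfl⟩
    · exact hq x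
    · rw [eval_monomial_eq_mul_prod]
      exact mul_nonneg ha.le (Finset.prod_nonneg fun k _ => (hγ k).pow_nonneg _)
  | zero => simp
  | add p q _ _ hp hq => exact map_add (eval x) p q ▸ add_nonneg hp hq

end SoncCone

section Decomposition

variable {n : ℕ} {ι : Type*} [Fintype ι] {α : ι → Fin n →₀ ℕ} {β : Fin n →₀ ℕ} {y : ι → ℝ}

theorem isCircuitPoly_of_affineIndependent {a w : ι → ℝ} (ha : ∀ i, 0 < a i)
    (hα : ∀ i k, Even (α i k)) (hw : ∀ i, 0 < w i) (hsum : ∑ i, w i = 1)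
    (hβ : ∀ k, (β k : ℝ) = ∑ i, w i * (α i k : ℝ))
    (hind : AffineIndependent ℝ fun i k => (α i k : ℝ)) (c : ℝ) :
    IsCircuitPoly (∑ i, monomial (α i) (a i) + monomial β c) := by
  have : Nonempty ι := by
    by_contra! h
    simp at hsum
  obtain ⟨r, hr⟩ : ∃ r, Fintype.card ι = r + 1 := Nat.exists_eq_succ_of_ne_zero Fintype.card_ne_zero
  have hrn : r ≤ n := by
    have := hind.card_le_finrank_succ.trans (Nat.succ_le_succ (Submodule.finrank_le _))
    simpa [hr] using this
  let e : Fin (r + 1) ≃ ι := (Fintype.equivFinOfCardEq hr).symm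
  have hsum' : ∑ j, w (e j) = 1 := (e.sum_comp w).trans hsum
  have hβ' (k : Fin n) : (β k : ℝ) = ∑ j, w (e j) * (α (e j) k : ℝ) :=
    (hβ k).trans (e.sum_comp fun i => w i * (α i k : ℝ)).symm
  refine ⟨r, hrn, α ∘ e, β, a ∘ e, c, w ∘ e, fun j => ha _, fun j => hα _, fun j => hw _, hsum',
    hβ', fun mu _ hmu hβmu => ?_, ?_⟩
  · funext j
    refine (hind.comp_embedding e.toEmbedding).eq_of_sum_eq_sum (hmu.trans hsum'.symm) ?_ j
      (Finset.mem_univ j)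
    ext k
    simpa using (hβmu k).symm.trans (hβ' k)
  · rw [← e.sum_comp]
    rfl

/-- The weights `w` such that `∑ i, w i * y i * x ^ α i + c * x ^ β` is SONC as soon as `c`
satisfies the circuit number bound for `w`; here `y i` plays the role of the quotient of the
`i`-th coefficient by its weight. -/
def soncWeights (α : ι → Fin n →₀ ℕ) (β : Fin n →₀ ℕ) (y : ι → ℝ) : Set (ι → ℝ) :=
  {w | (∀ i, 0 ≤ w i) ∧ ∀ c : ℝ, |c| ≤ ∏ i, y i ^ w i →
    ∑ i, monomial (α i) (w i * y i) + monomial β c ∈ soncCone n}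

lemma basicWeights_subset_soncWeights (hα : ∀ i k, Even (α i k)) (hy : ∀ i, 0 ≤ y i) :
    basicWeights ℝ (fun i k => (α i k : ℝ)) (fun k => (β k : ℝ)) ⊆ soncWeights α β y := by
  classical
  rintro w ⟨hw, hx, hind⟩
  have hβ (k : Fin n) : (β k : ℝ) = ∑ i, w i * (α i k : ℝ) := by
    simpa using (congrFun hx k).symm
  refine ⟨hw.1, fun c hc => ?_⟩
  rcases eq_or_ne c 0 with rfl | hc₀
  · rw [monomial_zero, add_zero]
    exact sum_mem fun i _ => monomial_mem_soncCone (hα i) (mul_nonneg (hw.1 i) (hy i))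
  refine AddSubmonoid.subset_closure (Or.inl
    ⟨?_, eval_sum_monomial_add_monomial_nonneg hα hw hβ hy hc⟩)
  have hwpos (i : Function.support w) : 0 < w i := (hw.1 i).lt_of_ne' i.2
  -- As `c ≠ 0`, the circuit number is nonzero, so no `y i` vanishes on the support of `w`.
  have hypos (i : Function.support w) : 0 < y i := by
    refine (hy i).lt_of_ne' fun h => ((abs_pos.2 hc₀).trans_le hc).ne' ?_
    exact Finset.prod_eq_zero (Finset.mem_univ i.1) (by rw [h, Real.zero_rpow i.2])
  have sum_support {M : Type} [AddCommMonoid M] (f : ι → M) (hf : ∀ i, w i = 0 → f i = 0) :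
      ∑ i : Function.support w, f i = ∑ i, f i :=
    Fintype.sum_of_injective _ Subtype.val_injective _ _ (by simpa using hf) fun _ => rfl
  rw [← sum_support (fun i => monomial (α i) (w i * y i)) fun i hi => by simp [hi]]
  refine isCircuitPoly_of_affineIndependent (w := fun i : Function.support w => w i)
    (fun i => mul_pos (hwpos i) (hypos i)) (fun i => hα i) hwpos ?_ (fun k => ?_) hind c
  · rw [sum_support w fun _ => id, hw.2]
  · rw [sum_support (fun i => w i * (α i k : ℝ)) fun i hi => by simp [hi], hβ k]

lemma convex_soncWeights (hy : ∀ i, 0 ≤ y i) : Convex ℝ (soncWeights α β y) := by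
  rintro u ⟨hu, hu_mem⟩ v ⟨hv, hv_mem⟩ θ τ hθ hτ hθτ
  refine ⟨fun i => add_nonneg (mul_nonneg hθ (hu i)) (mul_nonneg hτ (hv i)), fun c hc => ?_⟩
  have hprod (w : ι → ℝ) : 0 ≤ ∏ i, y i ^ w i :=
    Finset.prod_nonneg fun i _ => Real.rpow_nonneg (hy i) _
  obtain ⟨a, b, ha, hb, rfl⟩ := exists_abs_le_eq_mul_add_mul hθ hτ (hprod u) (hprod v)
    (hc.trans (prod_rpow_add_smul_le hy hu hv hθ hτ hθτ))
  convert add_mem (smul_mem_soncCone (hu_mem a ha) hθ) (smul_mem_soncCone (hv_mem b hb) hτ) using 1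
  simp only [smul_add, Finset.smul_sum, smul_monomial, smul_eq_mul]
  rw [add_add_add_comm, ← Finset.sum_add_distrib]
  simp only [← map_add, Pi.add_apply, Pi.smul_apply, smul_eq_mul, add_mul, mul_assoc]

theorem sum_monomial_add_monomial_mem_soncCone {a w : ι → ℝ} {c : ℝ} (hα : ∀ i k, Even (α i k))
    (ha : ∀ i, 0 ≤ a i) (hw : w ∈ stdSimplex ℝ ι)
    (hβ : ∀ k, (β k : ℝ) = ∑ i, w i * (α i k : ℝ)) (hc : |c| ≤ ∏ i, (a i / w i) ^ w i) :
    ∑ i, monomial (α i) (a i) + monomial β c ∈ soncCone n := by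
  have hy (i : ι) : 0 ≤ a i / w i := div_nonneg (ha i) (hw.1 i)
  have hx : ∑ i, w i • (fun k => (α i k : ℝ)) = fun k => (β k : ℝ) := by
    ext k
    simpa using (hβ k).symm
  have hmem : w ∈ soncWeights α β fun i => a i / w i :=
    convexHull_min (basicWeights_subset_soncWeights hα hy) (convex_soncWeights hy)
      (hx ▸ mem_convexHull_basicWeights _ hw)
  have hle (i : ι) : w i * (a i / w i) ≤ a i := by
    rcases eq_or_ne (w i) 0 with h | h
    · simpa [h] using ha i
    · exact (mul_div_cancel₀ (a i) h).le
  have hrest : ∑ i, monomial (α i) (a i - w i * (a i / w i)) ∈ soncCone n :=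
    sum_mem fun i _ => monomial_mem_soncCone (hα i) (sub_nonneg.2 (hle i))
  convert add_mem (hmem.2 c hc) hrest using 1
  rw [add_right_comm, ← Finset.sum_add_distrib]
  simp only [← map_add, add_sub_cancel]

end Decomposition

section Certificate

lemma sum_monomial_update_eq_add_C {ι σ R : Type*} [Fintype ι] [DecidableEq ι] [CommRing R]
    {α : ι → σ →₀ ℕ} {b : ι → R} {i₀ : ι} (hα₀ : α i₀ = 0) (B : R) :
    ∑ i, monomial (α i) (Function.update b i₀ B i) =
      ∑ i, monomial (α i) (b i) + C (B - b i₀) := by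
  have hsum : ∑ i, monomial (α i) (Function.update b i₀ B i - b i) = C (B - b i₀) := by
    rw [Fintype.sum_eq_single i₀ fun i hi => by simp [hi]]
    rw [Function.update_self, hα₀, C_apply]
  rw [← hsum, ← Finset.sum_add_distrib]
  simp only [← map_add, add_sub_cancel]

variable {n : ℕ} {ι κ : Type*} [Fintype ι] [Fintype κ] {α : ι → Fin n →₀ ℕ}
  {β : κ → Fin n →₀ ℕ} {b : ι → ℝ} {c : κ → ℝ} {lam X : ι → κ → ℝ}

theorem sum_monomial_add_sum_monomial_mem_soncCone (hα : ∀ i k, Even (α i k))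
    (hlam : ∀ i j, 0 ≤ lam i j) (hlamsum : ∀ j, ∑ i, lam i j = 1)
    (hβ : ∀ j k, (β j k : ℝ) = ∑ i, lam i j * (α i k : ℝ)) (hX : ∀ i j, 0 ≤ X i j)
    (hXb : ∀ i, ∑ j, X i j ≤ b i) (hc : ∀ j, |c j| ≤ ∏ i, (X i j / lam i j) ^ lam i j) :
    ∑ i, monomial (α i) (b i) + ∑ j, monomial (β j) (c j) ∈ soncCone n := by
  have hterms : ∑ j, (∑ i, monomial (α i) (X i j) + monomial (β j) (c j)) ∈ soncCone n :=
    sum_mem fun j _ => sum_monomial_add_monomial_mem_soncCone hα (hX · j)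
      ⟨(hlam · j), hlamsum j⟩ (hβ j) (hc j)
  have hslack : ∑ i, monomial (α i) (b i - ∑ j, X i j) ∈ soncCone n :=
    sum_mem fun i _ => monomial_mem_soncCone (hα i) (sub_nonneg.2 (hXb i))
  convert add_mem hterms hslack using 1
  rw [Finset.sum_add_distrib, Finset.sum_comm, add_right_comm, ← Finset.sum_add_distrib]
  simp only [← map_sum, ← map_add, add_sub_cancel]

/-- When `lam i j = 0` the factor `(X i j / lam i j) ^ lam i j` is `1`, so that `β j` may lie in a
proper face of the Newton polytope. -/
theorem SONC_simplex_certificate_general {i₀ : ι} (hα₀ : α i₀ = 0) (hα : ∀ i k, Even (α i k))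
    (hlam : ∀ i j, 0 ≤ lam i j) (hlamsum : ∀ j, ∑ i, lam i j = 1)
    (hβ : ∀ j k, (β j k : ℝ) = ∑ i, lam i j * (α i k : ℝ)) (hX : ∀ i j, 0 ≤ X i j)
    (hXb : ∀ i ≠ i₀, ∑ j, X i j ≤ b i)
    (hc : ∀ j, |c j| ≤ ∏ i, (X i j / lam i j) ^ lam i j) :
    ∑ i, monomial (α i) (b i) + ∑ j, monomial (β j) (c j) + C (∑ j, X i₀ j - b i₀) ∈ soncCone n ∧
      ∀ x : Fin n → ℝ, b i₀ - ∑ j, X i₀ j ≤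
        eval x (∑ i, monomial (α i) (b i) + ∑ j, monomial (β j) (c j)) := by
  classical
  have hXb' (i : ι) : ∑ j, X i j ≤ Function.update b i₀ (∑ j, X i₀ j) i := by
    rcases eq_or_ne i i₀ with rfl | hi
    · simp
    · simpa [hi] using hXb i hi
  have hmem := sum_monomial_add_sum_monomial_mem_soncCone hα hlam hlamsum hβ hX hXb' hc
  rw [sum_monomial_update_eq_add_C hα₀, add_right_comm] at hmem
  refine ⟨hmem, fun x => ?_⟩
  have hx := eval_nonneg_of_mem_soncCone hmem x
  rw [map_add, eval_C] at hx
  linarith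

end Certificate

/-- (Correctness of the SONC certificate obtained from a
feasible point of the program SONC-simplex.) Let
`p = Σ_{i=0}^{h-1} b_i x^{α(i)} + Σ_{j=0}^{t-h-1} b_{h+j} x^{β(j)}` with
`α(0) = 0`, each `α(i) ∈ (2ℕ)^n`, `b_i > 0`, and each `β(j)` a positive convex
combination `β(j) = Σ_i λ_{i,j} α(i)` with `λ_{i,j} > 0`, `Σ_i λ_{i,j} = 1`.
If `X_{i,j} > 0` satisfies `Σ_j X_{i,j} ≤ b_i` for `1 ≤ i ≤ h-1` and
`Π_i (X_{i,j}/λ_{i,j})^{λ_{i,j}} ≥ |b_{h+j}|` for all `j`, then with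
`γ = Σ_j X_{0,j} - b_0`, the polynomial `p + γ` is a sum of nonnegative
circuit polynomials (plus monomial squares); in particular
`p(x) ≥ b_0 - Σ_j X_{0,j}` for all `x ∈ ℝ^n`. -/
theorem SONC_simplex_certificate
    (n h t : ℕ) (hh : 0 < h) (hht : h < t)
    (α : Fin h → (Fin n →₀ ℕ)) (β : Fin (t - h) → (Fin n →₀ ℕ))
    (b : Fin h → ℝ) (c : Fin (t - h) → ℝ)
    (hα0 : α ⟨0, hh⟩ = 0)
    (heven : ∀ i k, Even (α i k))
    (hb : ∀ i, 0 < b i)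
    (lam : Fin h → Fin (t - h) → ℝ)
    (hlam : ∀ i j, 0 < lam i j)
    (hlamsum : ∀ j, ∑ i, lam i j = 1)
    (hbar : ∀ j k, (β j k : ℝ) = ∑ i, lam i j * (α i k : ℝ))
    (X : Fin h → Fin (t - h) → ℝ)
    (hX : ∀ i j, 0 < X i j)
    (hcons : ∀ i : Fin h, 1 ≤ (i : ℕ) → ∑ j, X i j ≤ b i)
    (hcirc : ∀ j, |c j| ≤ ∏ i, (X i j / lam i j) ^ lam i j) :
    (∃ (N : ℕ) (q : Fin N → MvPolynomial (Fin n) ℝ),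
      (∀ m, (IsCircuitPoly (q m) ∧ ∀ x : Fin n → ℝ, 0 ≤ eval x (q m)) ∨
        IsMonomialSquare (q m)) ∧
      ((∑ i, monomial (α i) (b i)) + ∑ j, monomial (β j) (c j)) +
          C ((∑ j, X ⟨0, hh⟩ j) - b ⟨0, hh⟩) = ∑ m, q m) ∧
    ∀ x : Fin n → ℝ,
      b ⟨0, hh⟩ - ∑ j, X ⟨0, hh⟩ j ≤
        eval x ((∑ i, monomial (α i) (b i)) + ∑ j, monomial (β j) (c j)) := by
  obtain ⟨hmem, hbound⟩ := SONC_simplex_certificate_general hα0 heven (fun i j => (hlam i j).le)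
    hlamsum hbar (fun i j => (hX i j).le)
    (fun i hi => hcons i (Nat.one_le_iff_ne_zero.2 (Fin.val_ne_of_ne hi))) hcirc
  exact ⟨exists_fin_sum_of_mem_soncCone hmem, hbound⟩
end
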